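/- Let R be an integral domain with field of fractions K, let m be a natural number, let f = (f_0, …, f_m) be a tuple of elements of R, not all zero, and let I be the ideal of R generated by f_0, …, f_m. Then the map sending h ∈ (R :_K I) to the tuple (h·f_0, …, h·f_m) ∈ R^{m+1} is an R-linear bijection from (R :_K I) onto the R-submodule {g ∈ R^{m+1} : g_i·f_j = g_j·f_i for all i, j ∈ {0, …, m}} of R^{m+1}. (In particular, the representatives of the rational map defined by f correspond bijectively to the elements of (R :_K I).) -/

import Mathlib

/-!
Fix an index `k` with `f k ≠ 0`. If `g` is proportional to `f`, the fraction `g k / f k ∈ K`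
satisfies `(g k / f k) * f i = g i` for all `i`, so it multiplies the generators of the ideal,
hence the whole ideal, into `R`. The `R`-linear map `g ↦ g k / f k` is therefore well defined
into the colon module, and it is inverse to `h ↦ (h * f i)ᵢ`. The equivalence is constructed as
the inverse of this map, whose linearity is immediate from its formula.
-/

/-- The colon module `(R :_K I)` of an ideal `I` of `R`, viewed as an `R`-submodule of `K`:
the set of `x ∈ K` such that `x · a` lies in the image of `R` in `K` for every `a ∈ I`. -/
def colonModule (R K : Type*) [CommRing R] [CommRing K] [Algebra R K]
    (I : Ideal R) : Submodule R K where
  carrier := {x | ∀ a ∈ I, ∃ r : R, x * algebraMap R K a = algebraMap R K r}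
  add_mem' := by
    intro x y hx hy a ha
    obtain ⟨r, hr⟩ := hx a ha
    obtain ⟨s, hs⟩ := hy a ha
    exact ⟨r + s, by rw [add_mul, hr, hs, map_add]⟩
  zero_mem' := by
    intro a _
    exact ⟨0, by simp⟩
  smul_mem' := by
    intro c x hx a ha
    obtain ⟨r, hr⟩ := hx a ha
    exact ⟨c * r, by rw [Algebra.smul_def, mul_assoc, hr, map_mul]⟩

/-- The `R`-submodule of `R^{m+1}` consisting of the vectors `g` proportional to `f`, i.e.,
those with `g i * f j = g j * f i` for all `i, j`. -/
def proportionalVectors (R : Type*) [CommRing R] {m : ℕ} (f : Fin (m + 1) → R) :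
    Submodule R (Fin (m + 1) → R) where
  carrier := {g | ∀ i j, g i * f j = g j * f i}
  add_mem' := by
    intro x y hx hy i j
    simp only [Pi.add_apply, add_mul, hx i j, hy i j]
  zero_mem' := by
    intro i j
    simp
  smul_mem' := by
    intro c x hx i j
    simp only [Pi.smul_apply, smul_eq_mul, mul_assoc, hx i j]

/-- Let `R` be an integral domain with field of fractions `K`, let `f = (f_0, …, f_m)` be a
tuple of elements of `R`, not all zero, and let `I` be the ideal generated by the `f_i`.
Then `h ↦ (h·f_0, …, h·f_m)` is an `R`-linear bijection from `(R :_K I)` onto the submodule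
`{g ∈ R^{m+1} : g_i·f_j = g_j·f_i for all i, j}` of `R^{m+1}`. -/
theorem colonModule_linearEquiv_proportionalVectors (R K : Type*) [CommRing R] [IsDomain R]
    [Field K] [Algebra R K] [IsFractionRing R K] (m : ℕ) (f : Fin (m + 1) → R) (hf : f ≠ 0) :
    ∃ e : colonModule R K (Ideal.span (Set.range f)) ≃ₗ[R] proportionalVectors R f,
      ∀ (h : colonModule R K (Ideal.span (Set.range f))) (i : Fin (m + 1)),
        algebraMap R K ((e h : Fin (m + 1) → R) i) = (h : K) * algebraMap R K (f i) := by
  obtain ⟨k, hk⟩ := Function.ne_iff.mp hf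
  have hk' : algebraMap R K (f k) ≠ 0 := by
    simpa using hk
  have key : ∀ g ∈ proportionalVectors R f, ∀ i,
      algebraMap R K (g k) / algebraMap R K (f k) * algebraMap R K (f i)
        = algebraMap R K (g i) := by
    intro g hg i
    rw [div_mul_eq_mul_div, div_eq_iff hk', ← map_mul, ← map_mul, hg k i]
  have mem : ∀ g ∈ proportionalVectors R f,
      algebraMap R K (g k) / algebraMap R K (f k)
        ∈ colonModule R K (Ideal.span (Set.range f)) := by
    intro g hg a ha
    induction ha using Submodule.span_induction with
    | mem x hx =>
      obtain ⟨i, rfl⟩ := hx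
      exact ⟨g i, key g hg i⟩
    | zero => exact ⟨0, by simp⟩
    | add x y _ _ hx hy =>
      obtain ⟨r, hr⟩ := hx
      obtain ⟨s, hs⟩ := hy
      exact ⟨r + s, by rw [map_add, mul_add, hr, hs, map_add]⟩
    | smul c x _ hx =>
      obtain ⟨r, hr⟩ := hx
      exact ⟨c * r, by rw [smul_eq_mul, map_mul, mul_left_comm, hr, map_mul]⟩
  let φ : proportionalVectors R f →ₗ[R] colonModule R K (Ideal.span (Set.range f)) :=
    { toFun := fun g => ⟨algebraMap R K (g.1 k) / algebraMap R K (f k), mem g.1 g.2⟩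
      map_add' := fun g g' => Subtype.ext (by simp [add_div])
      map_smul' := fun c g => Subtype.ext (by simp [Algebra.smul_def, mul_div_assoc]) }
  have hφ : ∀ g i, ((φ g : K)) * algebraMap R K (f i) = algebraMap R K (g.1 i) :=
    fun g i => key g.1 g.2 i
  have inj : Function.Injective φ := by
    intro g g' h
    refine Subtype.ext (funext fun i => IsFractionRing.injective R K ?_)
    rw [← hφ, ← hφ, h]
  have surj : Function.Surjective φ := by
    intro h
    choose g hg using fun i => h.2 (f i) (Ideal.subset_span ⟨i, rfl⟩)
    refine ⟨⟨g, fun i j => IsFractionRing.injective R K ?_⟩, Subtype.ext ?_⟩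
    · rw [map_mul, map_mul, ← hg, ← hg, mul_right_comm]
    · exact (div_eq_iff hk').mpr (hg k).symm
  refine ⟨(LinearEquiv.ofBijective φ ⟨inj, surj⟩).symm, fun h i => ?_⟩
  rw [← hφ]
  exact congrArg (fun x : colonModule R K (Ideal.span (Set.range f)) =>
    (x : K) * algebraMap R K (f i))
    ((LinearEquiv.ofBijective φ ⟨inj, surj⟩).apply_symm_apply h)
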